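/- Let (P, ·, [·,·], ε, α) be a Hom-Poisson color algebra and let N : P → P be a Nijenhuis operator on P, i.e. an even linear map with N∘α = α∘N, N(x)·N(y) = N(N(x)·y + x·N(y) − N(x·y)), and [N(x), N(y)] = N([N(x), y] + [x, N(y)] − N([x,y])) for all homogeneous x, y. Define new operations by x ·_N y = N(x)·y + x·N(y) − N(x·y) and [x,y]_N = [N(x), y] + [x, N(y)] − N([x,y]) for homogeneous x, y. Then (P, ·_N, [·,·]_N, ε, α) is a Hom-Poisson color algebra; moreover, N is a morphism of Hom-Poisson color algebras from (P, ·_N, [·,·]_N, ε, α) onto (P, ·, [·,·], ε, α), i.e. N(x ·_N y) = N(x)·N(y), N([x,y]_N) = [N(x), N(y)], and N∘α = α∘N. -/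

import Mathlib

open scoped TensorProduct

variable {K G V : Type*} [Field K] [AddCommGroup G] [AddCommGroup V] [Module K V]

/-- A skew-symmetric bicharacter on the abelian group `G` with values in `K \ {0}`. -/
def IsBicharacter (ε : G → G → K) : Prop :=
  (∀ a b, ε a b ≠ 0) ∧ (∀ a b, ε a b * ε b a = 1) ∧
    (∀ a b c, ε a (b + c) = ε a b * ε a c) ∧
    (∀ a b c, ε (a + b) c = ε a c * ε b c)

/-- `μ` is an even bilinear map for the grading `ℬ`: `μ(ℬ a, ℬ b) ⊆ ℬ (a + b)`. -/
def IsEvenBilinear (ℬ : G → Submodule K V) (μ : V →ₗ[K] V →ₗ[K] V) : Prop :=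
  ∀ ⦃a b : G⦄ ⦃x y : V⦄, x ∈ ℬ a → y ∈ ℬ b → μ x y ∈ ℬ (a + b)

/-- `α` is an even linear map for the grading `ℬ`: `α(ℬ a) ⊆ ℬ a`. -/
def IsEvenLinear (ℬ : G → Submodule K V) (α : V →ₗ[K] V) : Prop :=
  ∀ ⦃a : G⦄ ⦃x : V⦄, x ∈ ℬ a → α x ∈ ℬ a

/-- `(V, μ, ε, α)` is a Hom-associative color algebra. -/
def IsHomAssociativeColor (ℬ : G → Submodule K V) (ε : G → G → K)
    (μ : V →ₗ[K] V →ₗ[K] V) (α : V →ₗ[K] V) : Prop :=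
  IsBicharacter ε ∧ IsEvenBilinear ℬ μ ∧ IsEvenLinear ℬ α ∧
    ∀ ⦃a b c : G⦄ ⦃x y z : V⦄, x ∈ ℬ a → y ∈ ℬ b → z ∈ ℬ c →
      μ (α x) (μ y z) = μ (μ x y) (α z)

/-- `(V, br, ε, α)` is a Hom-Lie color algebra. -/
def IsHomLieColor (ℬ : G → Submodule K V) (ε : G → G → K)
    (br : V →ₗ[K] V →ₗ[K] V) (α : V →ₗ[K] V) : Prop :=
  IsBicharacter ε ∧ IsEvenBilinear ℬ br ∧ IsEvenLinear ℬ α ∧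
    (∀ ⦃a b : G⦄ ⦃x y : V⦄, x ∈ ℬ a → y ∈ ℬ b → br x y = -(ε a b • br y x)) ∧
    (∀ ⦃a b c : G⦄ ⦃x y z : V⦄, x ∈ ℬ a → y ∈ ℬ b → z ∈ ℬ c →
      ε c a • br (α x) (br y z) + ε a b • br (α y) (br z x) +
        ε b c • br (α z) (br x y) = 0)

/-- `(V, μ, br, ε, α)` is a Hom-Poisson color algebra. -/
def IsHomPoissonColor (ℬ : G → Submodule K V) (ε : G → G → K)
    (μ br : V →ₗ[K] V →ₗ[K] V) (α : V →ₗ[K] V) : Prop :=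
  IsHomAssociativeColor ℬ ε μ α ∧ IsHomLieColor ℬ ε br α ∧
    ∀ ⦃a b c : G⦄ ⦃x y z : V⦄, x ∈ ℬ a → y ∈ ℬ b → z ∈ ℬ c →
      br (α x) (μ y z) = μ (br x y) (α z) + ε a b • μ (α y) (br x z)

/-- Twisted operation. -/
def twN (f : V →ₗ[K] V →ₗ[K] V) (N : V →ₗ[K] V) : V →ₗ[K] V →ₗ[K] V :=
  f.comp N + f.compl₂ N - f.compr₂ N

theorem twN_apply (f : V →ₗ[K] V →ₗ[K] V) (N : V →ₗ[K] V) (x y : V) :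
    twN f N x y = f (N x) y + f x (N y) - N (f x y) := by
  simp [twN]

theorem twN_left (f g : V →ₗ[K] V →ₗ[K] V) (N α : V →ₗ[K] V) (x y z : V)
    (hα : ∀ v, N (α v) = α (N v))
    (h1 : f (N (α x)) (N (g y z)) =
      N (f (N (α x)) (g y z) + f (α x) (N (g y z)) - N (f (α x) (g y z))))
    (h2 : g (N y) (N z) = N (g (N y) z + g y (N z) - N (g y z))) :
    twN f N (α x) (twN g N y z) =
      f (α (N x)) (g (N y) z) + f (α (N x)) (g y (N z)) + f (α x) (g (N y) (N z))
      - N (f (α (N x)) (g y z) + f (α x) (g (N y) z) + f (α x) (g y (N z)))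
      + N (N (f (α x) (g y z))) := by
  rw [twN_apply f, twN_apply g, ← h2]
  rw [hα] at *
  simp only [map_add, map_sub] at *
  rw [h1]
  abel

theorem twN_right (f g : V →ₗ[K] V →ₗ[K] V) (N α : V →ₗ[K] V) (x y z : V)
    (hα : ∀ v, N (α v) = α (N v))
    (h1 : f (N (g x y)) (N (α z)) =
      N (f (N (g x y)) (α z) + f (g x y) (N (α z)) - N (f (g x y) (α z))))
    (h2 : g (N x) (N y) = N (g (N x) y + g x (N y) - N (g x y))) :
    twN f N (twN g N x y) (α z) =
      f (g (N x) (N y)) (α z) + f (g (N x) y) (α (N z)) + f (g x (N y)) (α (N z))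
      - N (f (g (N x) y) (α z) + f (g x (N y)) (α z) + f (g x y) (α (N z)))
      + N (N (f (g x y) (α z))) := by
  rw [twN_apply f, twN_apply g, ← h2]
  rw [hα] at *
  simp only [map_add, map_sub, LinearMap.add_apply, LinearMap.sub_apply] at *
  rw [h1]
  abel

/-- twisting a Hom-Poisson color algebra by a Nijenhuis operator
`N`, via `x ·_N y = N(x)·y + x·N(y) − N(x·y)` and
`[x, y]_N = [N(x), y] + [x, N(y)] − N([x, y])`, yields a Hom-Poisson color
algebra, and `N` is a morphism from the twisted algebra onto the original one. -/
theorem stmt9 (ℬ : G → Submodule K V) (ε : G → G → K)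
    (μ br : V →ₗ[K] V →ₗ[K] V) (α : V →ₗ[K] V)
    (hP : IsHomPoissonColor ℬ ε μ br α)
    (N : V →ₗ[K] V) (hNeven : IsEvenLinear ℬ N)
    (hNα : N.comp α = α.comp N)
    (hNμ : ∀ ⦃a b : G⦄ ⦃x y : V⦄, x ∈ ℬ a → y ∈ ℬ b →
      μ (N x) (N y) = N (μ (N x) y + μ x (N y) - N (μ x y)))
    (hNbr : ∀ ⦃a b : G⦄ ⦃x y : V⦄, x ∈ ℬ a → y ∈ ℬ b →
      br (N x) (N y) = N (br (N x) y + br x (N y) - N (br x y))) :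
    IsHomPoissonColor ℬ ε (μ.comp N + μ.compl₂ N - μ.compr₂ N)
        (br.comp N + br.compl₂ N - br.compr₂ N) α ∧
      (∀ ⦃a b : G⦄ ⦃x y : V⦄, x ∈ ℬ a → y ∈ ℬ b →
        N ((μ.comp N + μ.compl₂ N - μ.compr₂ N) x y) = μ (N x) (N y)) ∧
      (∀ ⦃a b : G⦄ ⦃x y : V⦄, x ∈ ℬ a → y ∈ ℬ b →
        N ((br.comp N + br.compl₂ N - br.compr₂ N) x y) = br (N x) (N y)) ∧
      N.comp α = α.comp N := by
  obtain ⟨⟨hε, hμe, hαe, hass⟩, ⟨-, hbe, -, hsk, hjac⟩, hlei⟩ := hP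
  have hα : ∀ v, N (α v) = α (N v) := fun v => LinearMap.congr_fun hNα v
  have hev : ∀ f : V →ₗ[K] V →ₗ[K] V, IsEvenBilinear ℬ f → IsEvenBilinear ℬ (twN f N) := by
    intro f hf a b x y hx hy
    rw [twN_apply]
    exact sub_mem (add_mem (hf (hNeven hx) hy) (hf hx (hNeven hy))) (hNeven (hf hx hy))
  change IsHomPoissonColor ℬ ε (twN μ N) (twN br N) α ∧
    (∀ ⦃a b : G⦄ ⦃x y : V⦄, x ∈ ℬ a → y ∈ ℬ b → N (twN μ N x y) = μ (N x) (N y)) ∧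
    (∀ ⦃a b : G⦄ ⦃x y : V⦄, x ∈ ℬ a → y ∈ ℬ b → N (twN br N x y) = br (N x) (N y)) ∧ _
  refine ⟨⟨⟨hε, hev μ hμe, hαe, ?_⟩, ⟨hε, hev br hbe, hαe, ?_, ?_⟩, ?_⟩, ?_, ?_, hNα⟩
  · intro a b c x y z hx hy hz
    have hx' := hNeven hx
    have hy' := hNeven hy
    have hz' := hNeven hz
    rw [twN_left μ μ N α x y z hα (hNμ (hαe hx) (hμe hy hz)) (hNμ hy hz),
      twN_right μ μ N α x y z hα (hNμ (hμe hx hy) (hαe hz)) (hNμ hx hy),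
      hass hx' hy' hz, hass hx' hy hz', hass hx hy' hz', hass hx' hy hz, hass hx hy' hz,
      hass hx hy hz', hass hx hy hz]
  · intro a b x y hx hy
    rw [twN_apply, twN_apply, hsk (hNeven hx) hy, hsk hx (hNeven hy), hsk hx hy]
    simp only [map_neg, map_smul, smul_sub, smul_add]
    abel
  · intro a b c x y z hx hy hz
    have hx' := hNeven hx
    have hy' := hNeven hy
    have hz' := hNeven hz
    rw [twN_left br br N α x y z hα (hNbr (hαe hx) (hbe hy hz)) (hNbr hy hz),
      twN_left br br N α y z x hα (hNbr (hαe hy) (hbe hz hx)) (hNbr hz hx),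
      twN_left br br N α z x y hα (hNbr (hαe hz) (hbe hx hy)) (hNbr hx hy)]
    have e1 := hjac hx' hy' hz
    have e2 := hjac hx' hy hz'
    have e3 := hjac hx hy' hz'
    have e4 := congrArg N (hjac hx' hy hz)
    have e5 := congrArg N (hjac hx hy' hz)
    have e6 := congrArg N (hjac hx hy hz')
    have e7 := congrArg N (congrArg N (hjac hx hy hz))
    simp only [map_add, map_smul, map_zero] at *
    linear_combination (norm := module) e1 + e2 + e3 - e4 - e5 - e6 + e7
  · intro a b c x y z hx hy hz
    have hx' := hNeven hx
    have hy' := hNeven hy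
    have hz' := hNeven hz
    rw [twN_left br μ N α x y z hα (hNbr (hαe hx) (hμe hy hz)) (hNμ hy hz),
      twN_right μ br N α x y z hα (hNμ (hbe hx hy) (hαe hz)) (hNbr hx hy),
      twN_left μ br N α y x z hα (hNμ (hαe hy) (hbe hx hz)) (hNbr hx hz),
      hlei hx' hy' hz, hlei hx' hy hz', hlei hx hy' hz', hlei hx' hy hz, hlei hx hy' hz,
      hlei hx hy hz', hlei hx hy hz]
    simp only [map_add, map_smul, smul_add, smul_sub]
    abel
  · intro a b x y hx hy
    rw [twN_apply, hNμ hx hy]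
  · intro a b x y hx hy
    rw [twN_apply, hNbr hx hy]
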